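/- arXiv:2110.00805 — 2 statements merged into one kernel-verified Lean document; each statement's English description precedes it below -/
import Mathlib

section
/- Under the paper's hypotheses (q = p^e odd, r ≥ 2 even, nN = q^r - 1, gcd((q^r-1)/(q-1), N) = 2), define Z(a) = (1/q) Σ_{y ∈ F_q} Σ_{x ∈ F_{q^r}} χ(y·Tr_{q^r/q}(a x^N)). If p ≡ 1 mod 4 and a ∈ F_{q^r}^* is a square, then Z(a) = (q^r - (q-1)q^{r/2})/q; if a is a non-square, Z(a) = (q^r + (q-1)q^{r/2})/q. -/
/-!
By orthogonality of additive characters, `Z(a)` is the number of `x ∈ F` with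
`Tr_{F/K}(a x ^ N) = 0`, where `K = 𝔽_q` and `F = 𝔽_{q ^ r}`. Put `D = (q ^ r - 1) / (q - 1)`. Every
`u ^ D` is the norm of `u`, hence a scalar in `K`, which does not affect the vanishing of the trace.
So by Bézout the exponent `N` may be replaced by `gcd(D, N) = 2`.

Let `η` be the quadratic character of `F`. As `t` has `1 + η(t)` square roots, it remains to sum `η`
over the hyperplane `Tr_{F/K} = 0`. Let `L` be an intermediate field with `[F : L] = 2` and `Q` its
cardinality. Elements of `Lˣ` are squares in `F`, so the sum of `η` over a fibre `Tr_{F/L} = s` is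
the same for all `s ≠ 0`. A nonzero `t` with `Tr_{F/L}(t) = t + t ^ Q = 0` has
`η(t) = (t ^ (Q - 1)) ^ ((Q + 1) / 2) = (-1) ^ ((Q + 1) / 2)`, which gives the fibre over `0`. The
other fibres follow because `η` sums to zero over `F`.
-/

section TraceZeros

open scoped Finset

/-- Substituting `x ↦ u ^ k * x` on the left and `u ↦ u * x ^ k` on the right, for suitable `k`,
shows that both sums equal the sum of `f (u ^ D.gcd N * x ^ N)` over all `u` and `x`, divided by the
order of `G`. -/
theorem sum_comp_pow_eq_sum_comp_pow_gcd {G M : Type*} [CommGroup G] [Fintype G] [AddCommMonoid M]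
    [IsAddTorsionFree M] {D : ℕ} (N : ℕ) {f : G → M} (hf : ∀ u x, f (u ^ D * x) = f x) :
    ∑ x, f (x ^ N) = ∑ x, f (x ^ D.gcd N) := by
  have hleft (u : G) : ∑ x, f (u ^ D.gcd N * x ^ N) = ∑ x, f (x ^ N) := by
    have hbezout : u ^ D.gcd N = (u ^ D.gcdA N) ^ D * (u ^ D.gcdB N) ^ N := by
      rw [← zpow_natCast, Nat.gcd_eq_gcd_ab, zpow_add, mul_comm (D : ℤ), mul_comm (N : ℤ),
        zpow_mul, zpow_mul, zpow_natCast, zpow_natCast]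
    simp_rw [hbezout, mul_assoc, hf, ← mul_pow]
    exact Equiv.sum_comp (Equiv.mulLeft (u ^ D.gcdB N)) fun x ↦ f (x ^ N)
  have hright (x : G) : ∑ u, f (u ^ D.gcd N * x ^ N) = ∑ u, f (u ^ D.gcd N) := by
    obtain ⟨k, hk⟩ := D.gcd_dvd_right N
    have hpow : x ^ N = (x ^ k) ^ D.gcd N := by rw [← pow_mul, mul_comm k, ← hk]
    simp_rw [hpow, ← mul_pow]
    exact Equiv.sum_comp (Equiv.mulRight (x ^ k)) fun u ↦ f (u ^ D.gcd N)
  apply nsmul_right_injective (Fintype.card_ne_zero (α := G))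
  calc Fintype.card G • ∑ x, f (x ^ N)
      = ∑ u, ∑ x, f (u ^ D.gcd N * x ^ N) := by simp [hleft]
    _ = ∑ x, ∑ u, f (u ^ D.gcd N * x ^ N) := Finset.sum_comm
    _ = Fintype.card G • ∑ u, f (u ^ D.gcd N) := by simp [hright]

theorem sum_eq_zero_add_sum_units {F M : Type*} [GroupWithZero F] [Fintype F]
    [DecidableEq F] [AddCommMonoid M] (g : F → M) : ∑ x, g x = g 0 + ∑ u : Fˣ, g u := by
  rw [Fintype.sum_eq_add_sum_subtype_ne g 0, ← Equiv.sum_comp unitsEquivNeZero]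
  rfl

theorem card_map_pow_eq_zero {K F V : Type*} [Field K] [Field F] [Fintype F] [Algebra K F]
    [AddCommGroup V] [Module K V] [DecidableEq V] (ℓ : F →ₗ[K] V) {N : ℕ} (hN : N ≠ 0) :
    #{x | ℓ (x ^ N) = 0} =
      #{x | ℓ (x ^ ((Nat.card F - 1) / (Nat.card K - 1)).gcd N) = 0} := by
  classical
  set D := (Nat.card F - 1) / (Nat.card K - 1) with hD
  let f (u : Fˣ) : ℕ := if ℓ u = 0 then 1 else 0
  have hf (u x : Fˣ) : f (u ^ D * x) = f x := by
    have hnorm : ((u ^ D * x : Fˣ) : F) = Algebra.norm K (u : F) • (x : F) := by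
      rw [Algebra.smul_def, FiniteField.algebraMap_norm_eq_pow, ← hD, Units.val_mul,
        Units.val_pow_eq_pow_val]
    simp [f, hnorm]
  simp_rw [Finset.card_filter, sum_eq_zero_add_sum_units, zero_pow hN,
    zero_pow (Nat.gcd_ne_zero_right hN)]
  exact congrArg _ (by simpa [f] using sum_comp_pow_eq_sum_comp_pow_gcd N hf)

theorem card_mul_card_fiber_of_surjective {A B : Type*} [AddGroup A] [Fintype A] [AddGroup B]
    [Fintype B] [DecidableEq B] {f : A →+ B} (hf : Function.Surjective f) (b : B) :
    Fintype.card B * #{x | f x = b} = Fintype.card A := by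
  have hfiber (c : B) : #{x | f x = c} = #{x | f x = b} :=
    AddMonoidHom.card_fiber_eq_of_mem_range f (hf c) (hf b)
  have hsum := Finset.card_eq_sum_card_fiberwise (f := f) (s := Finset.univ) (t := Finset.univ)
    (by simp)
  simpa [hfiber] using hsum.symm

theorem card_mul_card_trace_fiber {K F : Type*} [Field K] [Fintype K] [DecidableEq K] [Field F]
    [Fintype F] [Algebra K F] (s : K) :
    Fintype.card K * #{x : F | Algebra.trace K F x = s} = Fintype.card F :=
  card_mul_card_fiber_of_surjective (f := (Algebra.trace K F).toAddMonoidHom)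
    (Algebra.trace_surjective K F) s

theorem sum_addChar_mul_eq_card {K X R : Type*} [Field K] [Fintype K] [DecidableEq K] [Fintype X]
    [CommRing R] [IsDomain R] {ψ : AddChar K R} (hψ : ψ ≠ 1) (f : X → K) :
    ∑ y, ∑ x, ψ (y * f x) = (Fintype.card K * #{x | f x = 0} : ℕ) := by
  rw [Finset.sum_comm]
  simp_rw [AddChar.sum_mulShift _ (AddChar.IsPrimitive.of_ne_one hψ)]
  simp [Finset.sum_ite, mul_comm]

section QuadraticCharacter

theorem card_mul_sq_mem {F : Type*} [Field F] [Fintype F] [DecidableEq F] (hF : ringChar F ≠ 2)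
    {a : F} (ha : a ≠ 0) (S : Finset F) :
    (#{x | a * x ^ 2 ∈ S} : ℤ) = #S + quadraticChar F a * ∑ t ∈ S, quadraticChar F t := by
  have hfiber (t : F) :
      (#{x | a * x ^ 2 = t} : ℤ) = quadraticChar F a * quadraticChar F t + 1 := by
    have hset : ({x | a * x ^ 2 = t} : Finset F) = {x | x ^ 2 = a * t * a⁻¹ ^ 2}.toFinset := by
      ext x
      have hscale : a * t * a⁻¹ ^ 2 = a⁻¹ * t := by field_simp
      simp only [Finset.mem_filter_univ, Set.mem_toFinset, Set.mem_ofPred_eq, hscale,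
        eq_inv_mul_iff_mul_eq₀ ha]
    rw [hset, quadraticChar_card_sqrts hF, map_mul, quadraticChar_sq_one' (inv_ne_zero ha), mul_one,
      map_mul]
  have hmaps : Set.MapsTo (a * · ^ 2) ({x | a * x ^ 2 ∈ S} : Finset F) (S : Set F) :=
    fun x hx ↦ by simpa using hx
  calc (#{x | a * x ^ 2 ∈ S} : ℤ)
      = ∑ t ∈ S, (#{x | a * x ^ 2 = t} : ℤ) := by
        rw [Finset.card_eq_sum_card_fiberwise hmaps, Nat.cast_sum]
        refine Finset.sum_congr rfl fun t ht ↦ ?_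
        rw [Finset.filter_filter]
        congr! 3 with x
        exact and_iff_right_of_imp fun hx ↦ hx ▸ ht
    _ = #S + quadraticChar F a * ∑ t ∈ S, quadraticChar F t := by
        simp [hfiber, Finset.sum_add_distrib, Finset.mul_sum, add_comm]

theorem card_mod_two_eq_one_of_ringChar_ne_two (L : Type*) {F : Type*} [Field L] [Fintype L]
    [Field F] [Algebra L F] (hF : ringChar F ≠ 2) : Fintype.card L % 2 = 1 :=
  FiniteField.odd_card_of_char_ne_two (Algebra.ringChar_eq L F ▸ hF)

theorem card_div_two_eq_of_finrank_eq_two {L F : Type*} [Field L] [Fintype L] [Field F] [Fintype F]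
    [Algebra L F] (hLF : Module.finrank L F = 2) (hF : ringChar F ≠ 2) :
    Fintype.card F / 2 = (Fintype.card L - 1) * (Fintype.card L / 2 + 1) := by
  obtain ⟨k, hk⟩ := Nat.odd_iff.2 (card_mod_two_eq_one_of_ringChar_ne_two L hF)
  have hdiv : (2 * k + 1) / 2 = k := by omega
  rw [Module.card_eq_pow_finrank (K := L) (V := F), hLF, hk, hdiv, Nat.add_sub_cancel]
  refine Nat.div_eq_of_lt_le ?_ ?_ <;> nlinarith

theorem isSquare_algebraMap_of_finrank_eq_two {L F : Type*} [Field L] [Field F] [Finite F]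
    [Algebra L F] (hLF : Module.finrank L F = 2) (l : L) : IsSquare (algebraMap L F l) := by
  have : Finite L := Finite.of_injective _ (algebraMap L F).injective
  have := Fintype.ofFinite L
  have := Fintype.ofFinite F
  by_cases hF : ringChar F = 2
  · exact FiniteField.isSquare_of_char_two hF _
  obtain rfl | hl := eq_or_ne l 0
  · simp
  rw [FiniteField.isSquare_iff hF (by simpa using hl), card_div_two_eq_of_finrank_eq_two hLF hF,
    pow_mul, ← map_pow, FiniteField.pow_card_sub_one_eq_one l hl, map_one, one_pow]

variable {L F : Type*} [Field L] [Fintype L] [Field F] [Fintype F] [DecidableEq F] [Algebra L F]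

theorem quadraticChar_of_trace_eq_zero (hLF : Module.finrank L F = 2) (hF : ringChar F ≠ 2) {t : F}
    (ht : t ≠ 0) (htr : Algebra.trace L F t = 0) :
    quadraticChar F t = -ZMod.χ₄ (Fintype.card L) := by
  have hpow : t ^ (Fintype.card L - 1) = -1 := by
    have hsum := FiniteField.algebraMap_trace_eq_sum_pow L F t
    rw [htr, map_zero, hLF, Nat.card_eq_fintype_card, Finset.sum_range_succ, Finset.sum_range_one,
      pow_zero, pow_one, pow_one] at hsum
    apply mul_left_cancel₀ ht
    rw [mul_pow_sub_one Fintype.card_ne_zero]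
    linear_combination -hsum
  rw [quadraticChar_eq_pow_of_char_ne_two hF ht, card_div_two_eq_of_finrank_eq_two hLF hF, pow_mul,
    hpow, ZMod.χ₄_eq_neg_one_pow (card_mod_two_eq_one_of_ringChar_ne_two L hF)]
  obtain h | h := Nat.even_or_odd (Fintype.card L / 2) <;>
    simp [pow_succ, h.neg_one_pow, Ring.neg_one_ne_one_of_char_ne_two hF]

theorem sum_quadraticChar_trace_eq_zero [DecidableEq L] (hLF : Module.finrank L F = 2)
    (hF : ringChar F ≠ 2) :
    ∑ t : F with Algebra.trace L F t = 0, quadraticChar F t =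
      -((Fintype.card L - 1) * ZMod.χ₄ (Fintype.card L)) := by
  have hcard : #{t : F | Algebra.trace L F t = 0} = Fintype.card L := by
    have h := card_mul_card_trace_fiber (F := F) (0 : L)
    rw [Module.card_eq_pow_finrank (K := L) (V := F), hLF, sq] at h
    exact mul_left_cancel₀ Fintype.card_ne_zero h
  have hmem : (0 : F) ∈ ({t | Algebra.trace L F t = 0} : Finset F) := by simp
  have hval (t : F) (ht : t ∈ ({t | Algebra.trace L F t = 0} : Finset F).erase 0) :
      quadraticChar F t = -ZMod.χ₄ (Fintype.card L) := by
    obtain ⟨ht0, htr⟩ := by simpa using ht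
    exact quadraticChar_of_trace_eq_zero hLF hF ht0 htr
  rw [← Finset.add_sum_erase _ _ hmem, Finset.sum_congr rfl hval, Finset.sum_const,
    Finset.card_erase_of_mem hmem, hcard, MulChar.map_zero, nsmul_eq_mul,
    Nat.cast_pred Fintype.card_pos]
  ring

theorem sum_quadraticChar_trace_eq [DecidableEq L] (hLF : Module.finrank L F = 2)
    (hF : ringChar F ≠ 2) {s : L} (hs : s ≠ 0) :
    ∑ t : F with Algebra.trace L F t = s, quadraticChar F t = ZMod.χ₄ (Fintype.card L) := by
  set c := ∑ t : F with Algebra.trace L F t = s, quadraticChar F t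
  have hscale (s' : L) (hs' : s' ≠ 0) :
      ∑ t : F with Algebra.trace L F t = s', quadraticChar F t = c := by
    have hl : algebraMap L F (s / s') ≠ 0 := by simp [hs, hs']
    refine Finset.sum_equiv (Equiv.mulLeft₀ _ hl) (fun t ↦ ?_) fun t _ ↦ ?_
    · simp only [Finset.mem_filter_univ, Equiv.mulLeft₀_apply, ← Algebra.smul_def, map_smul,
        smul_eq_mul]
      rw [div_mul_eq_mul_div, div_eq_iff hs', mul_right_inj' hs]
    · rw [Equiv.mulLeft₀_apply, map_mul, (quadraticChar_one_iff_isSquare hl).2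
        (isSquare_algebraMap_of_finrank_eq_two hLF _), one_mul]
  have htotal : ∑ s' : L, ∑ t : F with Algebra.trace L F t = s', quadraticChar F t = 0 := by
    rw [Finset.sum_fiberwise, quadraticChar_sum_zero hF]
  rw [← Finset.add_sum_erase _ _ (Finset.mem_univ 0), sum_quadraticChar_trace_eq_zero hLF hF,
    Finset.sum_congr rfl fun s' hs' ↦ hscale s' (Finset.ne_of_mem_erase hs'), Finset.sum_const,
    Finset.card_erase_of_mem (Finset.mem_univ _), Finset.card_univ, nsmul_eq_mul,
    Nat.cast_pred Fintype.card_pos] at htotal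
  have hL : (Fintype.card L : ℤ) - 1 ≠ 0 := by
    have := Fintype.one_lt_card (α := L)
    omega
  exact mul_left_cancel₀ hL (by linear_combination htotal)

theorem card_mul_sum_quadraticChar_trace_eq_zero_of_tower {K : Type*} [Field K] [Fintype K]
    [DecidableEq K] [Algebra K L] [Algebra K F] [IsScalarTower K L F]
    (hLF : Module.finrank L F = 2) (hF : ringChar F ≠ 2) :
    Fintype.card K * ∑ t : F with Algebra.trace K F t = 0, quadraticChar F t =
      -(ZMod.χ₄ (Fintype.card L) * (Fintype.card K - 1) * Fintype.card L) := by
  classical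
  set H : Finset L := {s | Algebra.trace K L s = 0}
  have hH : (Fintype.card K * #H : ℤ) = Fintype.card L :=
    mod_cast card_mul_card_trace_fiber (F := L) (0 : K)
  have h0 : (0 : L) ∈ H := by simp [H]
  have hfiber : ∑ t : F with Algebra.trace K F t = 0, quadraticChar F t =
      ∑ s ∈ H, ∑ t : F with Algebra.trace L F t = s, quadraticChar F t := by
    rw [← Finset.sum_fiberwise_of_maps_to (g := Algebra.trace L F) (t := H)
      (by simp [H, Algebra.trace_trace])]
    refine Finset.sum_congr rfl fun s hs ↦ Finset.sum_congr ?_ fun _ _ ↦ rfl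
    ext t
    simp only [Finset.mem_filter, Finset.mem_univ, true_and, and_iff_right_iff_imp, H] at hs ⊢
    rintro rfl
    rwa [← Algebra.trace_trace (S := L)]
  rw [hfiber, ← Finset.add_sum_erase _ _ h0, sum_quadraticChar_trace_eq_zero hLF hF,
    Finset.sum_congr rfl fun s hs ↦ sum_quadraticChar_trace_eq hLF hF (Finset.ne_of_mem_erase hs),
    Finset.sum_const, Finset.card_erase_of_mem h0, nsmul_eq_mul,
    Nat.cast_pred (Finset.card_pos.2 ⟨0, h0⟩)]
  linear_combination ZMod.χ₄ (Fintype.card L) * hH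

end QuadraticCharacter

theorem exists_intermediateField_finrank_eq {K F : Type*} [Field K] [Field F] [Algebra K F]
    [FiniteDimensional K F] [IsGalois K F] {p : ℕ} [Fact p.Prime] (hp : p ∣ Module.finrank K F) :
    ∃ L : IntermediateField K F, Module.finrank L F = p := by
  rw [← IsGalois.card_aut_eq_finrank] at hp
  obtain ⟨σ, hσ⟩ := exists_prime_orderOf_dvd_card' p hp
  exact ⟨IntermediateField.fixedField (Subgroup.zpowers σ), by
    rw [IntermediateField.finrank_fixedField_eq_card, Nat.card_zpowers, hσ]⟩

section EvenDegree

variable {K F : Type*} [Field K] [Fintype K] [DecidableEq K] [Field F] [Fintype F] [DecidableEq F]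
  [Algebra K F] {q r : ℕ}

theorem card_mul_sum_quadraticChar_trace_eq_zero (hK : Fintype.card K = q)
    (hFq : Fintype.card F = q ^ r) (hr : Even r) (hF : ringChar F ≠ 2) :
    q * ∑ t : F with Algebra.trace K F t = 0, quadraticChar F t =
      -(ZMod.χ₄ (q ^ (r / 2)) * (q - 1) * q ^ (r / 2)) := by
  have hfinrank : Module.finrank K F = r := by
    apply Nat.pow_right_injective (Fintype.one_lt_card (α := K))
    exact Module.card_eq_pow_finrank.symm.trans (hK ▸ hFq)
  obtain ⟨L, hLF⟩ := exists_intermediateField_finrank_eq (K := K) (F := F) (p := 2)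
    (hfinrank ▸ hr.two_dvd)
  classical
  have hL : Fintype.card L = q ^ (r / 2) := by
    rw [Module.card_eq_pow_finrank (K := K) (V := L), hK, ← hfinrank,
      ← Module.finrank_mul_finrank K L F, hLF, Nat.mul_div_cancel _ two_pos]
  have h := card_mul_sum_quadraticChar_trace_eq_zero_of_tower (K := K) hLF hF
  rw [hK, hL] at h
  push_cast at h
  exact h

theorem card_mul_card_trace_mul_sq_eq_zero (hK : Fintype.card K = q)
    (hFq : Fintype.card F = q ^ r) (hr : Even r) (hF : ringChar F ≠ 2) {a : F} (ha : a ≠ 0) :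
    (q * #{x | Algebra.trace K F (a * x ^ 2) = 0} : ℤ) =
      q ^ r - quadraticChar F a * ZMod.χ₄ (q ^ (r / 2)) * (q - 1) * q ^ (r / 2) := by
  have hhyperplane : (q * #{t : F | Algebra.trace K F t = 0} : ℤ) = q ^ r := by
    exact_mod_cast hK ▸ hFq ▸ card_mul_card_trace_fiber (F := F) (0 : K)
  have hzeros := card_mul_sq_mem hF ha {t | Algebra.trace K F t = 0}
  simp only [Finset.mem_filter_univ] at hzeros
  rw [hzeros]
  linear_combination hhyperplane +
    quadraticChar F a * card_mul_sum_quadraticChar_trace_eq_zero hK hFq hr hF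

theorem card_mul_card_trace_mul_pow_eq_zero (hK : Fintype.card K = q)
    (hFq : Fintype.card F = q ^ r) (hr : Even r) (hF : ringChar F ≠ 2) {N : ℕ} (hN : N ≠ 0)
    (hgcd : ((q ^ r - 1) / (q - 1)).gcd N = 2) {a : F} (ha : a ≠ 0) :
    (q * #{x | Algebra.trace K F (a * x ^ N) = 0} : ℤ) =
      q ^ r - quadraticChar F a * ZMod.χ₄ (q ^ (r / 2)) * (q - 1) * q ^ (r / 2) := by
  have hcount := card_map_pow_eq_zero (Algebra.trace K F ∘ₗ LinearMap.mulLeft K a) hN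
  rw [Nat.card_eq_fintype_card, Nat.card_eq_fintype_card, hK, hFq, hgcd] at hcount
  rw [← card_mul_card_trace_mul_sq_eq_zero hK hFq hr hF ha]
  exact congrArg (fun n : ℕ ↦ (q * n : ℤ)) hcount

end EvenDegree

theorem Z_value_p1mod4_general {K F R : Type*} [Field K] [Fintype K] [Field F] [Fintype F]
    [Algebra K F] [Field R] {q r N : ℕ} (hK : Fintype.card K = q)
    (hFq : Fintype.card F = q ^ r) (hq : Odd q) (hr : Even r) (hN : N ≠ 0)
    (hgcd : ((q ^ r - 1) / (q - 1)).gcd N = 2) {ψ : AddChar K R} (hψ : ψ ≠ 1) {a : F}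
    (ha : a ≠ 0) :
    let Z := (1 / q : R) * ∑ y, ∑ x, ψ (y * Algebra.trace K F (a * x ^ N))
    let ε : R := (ZMod.χ₄ (q ^ (r / 2)) : ℤ)
    (IsSquare a → Z = (q ^ r - ε * (q - 1) * q ^ (r / 2)) / q) ∧
      (¬ IsSquare a → Z = (q ^ r + ε * (q - 1) * q ^ (r / 2)) / q) := by
  classical
  intro Z ε
  have hF : ringChar F ≠ 2 := fun h ↦ by
    have hodd : Fintype.card F % 2 = 1 := Nat.odd_iff.1 (hFq ▸ hq.pow)
    exact absurd (FiniteField.even_card_iff_char_two.1 h) (by simp [hodd])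
  have hZ : Z = (q ^ r - (quadraticChar F a : ℤ) * ε * (q - 1) * q ^ (r / 2)) / q := by
    have hcount := congrArg (Int.cast (R := R))
      (card_mul_card_trace_mul_pow_eq_zero hK hFq hr hF hN hgcd ha)
    push_cast at hcount
    rw [← hcount, ← hK, ← Nat.cast_mul, ← sum_addChar_mul_eq_card hψ, hK,
      ← one_div_mul_eq_div]
  constructor <;> intro h
  · simp [hZ, (quadraticChar_one_iff_isSquare ha).2 h]
  · simp [hZ, quadraticChar_neg_one_iff_not_isSquare.2 h]

/-- The canonical additive character of a finite field of characteristic `p`, the `χ` of the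
statement. -/
noncomputable def traceAddChar (p : ℕ) [Fact p.Prime] (K : Type*) [Field K] [Algebra (ZMod p) K] :
    AddChar K ℂ :=
  ZMod.stdAddChar.compAddMonoidHom (Algebra.trace (ZMod p) K).toAddMonoidHom

theorem traceAddChar_ne_one (p : ℕ) [Fact p.Prime] (K : Type*) [Field K] [Finite K]
    [Algebra (ZMod p) K] : traceAddChar p K ≠ 1 := by
  have hstd : (ZMod.stdAddChar : AddChar (ZMod p) ℂ) ≠ 1 := by
    simpa using ZMod.isPrimitive_stdAddChar p one_ne_zero
  exact (AddChar.compAddMonoidHom_injective_left (M := ℂ)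
    (Algebra.trace (ZMod p) K).toAddMonoidHom (Algebra.trace_surjective (ZMod p) K)).ne hstd

theorem traceAddChar_apply (p : ℕ) [Fact p.Prime] {K : Type*} [Field K] [Algebra (ZMod p) K]
    (x : K) : traceAddChar p K x =
      Complex.exp (2 * Real.pi * Complex.I * ((Algebra.trace (ZMod p) K x).val : ℂ) / p) := by
  rw [← ZMod.toCircle_apply, ← ZMod.stdAddChar_apply]
  rfl

end TraceZeros

open Complex in
/-- Eq. (4.7)/(4.8) for `p ≡ 1 (mod 4)`: with
`Z(a) = q⁻¹ ∑_{y ∈ F_q} ∑_{x ∈ F_{q^r}} χ(y · Tr_{q^r/q}(a x^N))`,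
if `a` is a nonzero square then `Z(a) = (q^r - (q-1) q^{r/2})/q`, and if `a` is a
non-square then `Z(a) = (q^r + (q-1) q^{r/2})/q`. -/
theorem Z_value_p1mod4 (p e q r N n : ℕ) (hp : p.Prime) (hpodd : Odd p)
    (hp4 : p % 4 = 1) (he : 0 < e) (hqe : q = p ^ e)
    (hr : 2 ≤ r) (hre : Even r) (hN : 0 < N) (hn : 0 < n)
    (hnN : n * N = q ^ r - 1)
    (hgcd : Nat.gcd ((q ^ r - 1) / (q - 1)) N = 2)
    (F : Type*) [Field F] [Fintype F] (hF : Fintype.card F = q ^ r)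
    (K : Subfield F) (hK : Nat.card K = q) [Fintype ↥K] [Algebra (ZMod p) ↥K]
    (a : F) (ha : a ≠ 0) :
    ∀ Z : ℂ,
      Z = (1 / (q : ℂ)) * ∑ y : ↥K, ∑ x : F,
        Complex.exp (2 * Real.pi * Complex.I *
          ((Algebra.trace (ZMod p) ↥K (y * Algebra.trace ↥K F (a * x ^ N))).val : ℂ) / p) →
      (IsSquare a → Z = ((q : ℂ) ^ r - ((q : ℂ) - 1) * (q : ℂ) ^ (r / 2)) / q) ∧
      (¬ IsSquare a → Z = ((q : ℂ) ^ r + ((q : ℂ) - 1) * (q : ℂ) ^ (r / 2)) / q) := by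
  rintro Z rfl
  have : Fact p.Prime := ⟨hp⟩
  have hχ : ZMod.χ₄ (q ^ (r / 2)) = 1 :=
    mod_cast ZMod.χ₄_nat_one_mod_four (n := q ^ (r / 2)) (by simp [hqe, Nat.pow_mod, hp4])
  simpa only [traceAddChar_apply, hχ, Int.cast_one, one_mul] using Z_value_p1mod4_general
    (Nat.card_eq_fintype_card.symm.trans hK) hF (hqe ▸ hpodd.pow) hre hN.ne' hgcd
    (traceAddChar_ne_one p K) ha
end

section
/- Under the paper's hypotheses with p ≡ 1 mod 4 and a ∈ F_{q^r}^* a square, the Hamming weight of the length-n codeword c(a) = (Tr(a η^{jN}))_{j=0}^{n-1} equals (1/N)(q^r - (q^r - (q-1)q^{r/2})/q), and if a is a non-square it equals (1/N)(q^r - (q^r + (q-1)q^{r/2})/q). -/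
/-!
Up to the factor `1 / N`, the weight counts the `u ∈ F_{q^r}ˣ` with `Tr (a u ^ N) ≠ 0`. This
condition is invariant under `F_qˣ`, the group of `(q ^ r - 1) / (q - 1)`-th powers, so by Bézout
`N` may be replaced by the gcd `2`. Counting square roots with the quadratic character `χ` leaves
`∑ χ(x) [Tr x ≠ 0]`. Let `L` be the subfield with `Q = q ^ (r / 2)` elements: `χ` is trivial on
`Lˣ`, and averaging over `Lˣ` turns the trace to `F_q` into the trace to `L`, whose nonzero kernel
elements `x` satisfy `x ^ (Q - 1) = -1` and hence `χ(x) = -χ₄(Q)`.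
-/

section GroupSums

variable {G : Type*} [Fintype G]

theorem sum_pow_eq_sum_pow_gcd [CommGroup G] {A : Type*} [AddCommMonoid A] [IsAddTorsionFree A]
    {f : G → A} {m : ℕ} (hf : ∀ g x, f (g ^ m * x) = f x) (k : ℕ) :
    ∑ g, f (g ^ k) = ∑ g, f (g ^ m.gcd k) := by
  obtain ⟨l, hl⟩ := m.gcd_dvd_right k
  have sum_right (g : G) : ∑ h, f (g ^ m.gcd k * h ^ k) = ∑ h, f (h ^ k) := by
    have bezout : g ^ m.gcd k = (g ^ m.gcdA k) ^ m * (g ^ m.gcdB k) ^ k := by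
      rw [← zpow_natCast, Nat.gcd_eq_gcd_ab, zpow_add, mul_comm (m : ℤ), mul_comm (k : ℤ),
        zpow_mul, zpow_mul, zpow_natCast, zpow_natCast]
    simp only [bezout, mul_assoc, hf, ← mul_pow]
    exact Equiv.sum_comp (Equiv.mulLeft (g ^ m.gcdB k)) fun h => f (h ^ k)
  have sum_left (h : G) : ∑ g, f (g ^ m.gcd k * h ^ k) = ∑ g, f (g ^ m.gcd k) := by
    have factor : h ^ k = (h ^ l) ^ m.gcd k := by rw [← pow_mul, mul_comm, ← hl]
    simp only [factor, ← mul_pow]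
    exact Equiv.sum_comp (Equiv.mulRight (h ^ l)) fun g => f (g ^ m.gcd k)
  have double_count := Finset.sum_comm (s := .univ) (t := .univ)
    (f := fun g h : G => f (g ^ m.gcd k * h ^ k))
  simp only [sum_right, sum_left, Finset.sum_const, Finset.card_univ] at double_count
  exact nsmul_right_injective Fintype.card_ne_zero double_count

theorem sum_eq_sum_range_pow [Group G] {A : Type*} [AddCommMonoid A] {η : G}
    (hη : ∀ x, x ∈ Subgroup.zpowers η) (f : G → A) :
    ∑ x, f x = ∑ k ∈ Finset.range (Fintype.card G), f (η ^ k) := by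
  classical
  have order : orderOf η = Fintype.card G := by
    rw [orderOf_eq_card_of_forall_mem_zpowers hη, Nat.card_eq_fintype_card]
  rw [← IsCyclic.image_range_orderOf hη, Finset.sum_image, order]
  simpa using pow_injOn_Iio_orderOf (x := η)

theorem sum_range_mul_of_periodic {A : Type*} [AddCommMonoid A] {g : ℕ → A} {n : ℕ}
    (hg : Function.Periodic g n) (N : ℕ) :
    ∑ k ∈ Finset.range (N * n), g k = N • ∑ k ∈ Finset.range n, g k := by
  rw [Finset.sum_range, ← finProdFinEquiv.sum_comp, Fintype.sum_prod_type]
  have shift (i : Fin N) (j : Fin n) : g (j + n * i) = g j := by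
    rw [mul_comm]
    exact hg.nat_mul i j
  simp [shift, Finset.sum_range]

theorem sum_zmod_val {A : Type*} [AddCommMonoid A] {n : ℕ} [NeZero n] (g : ℕ → A) :
    ∑ j : ZMod n, g j.val = ∑ k ∈ Finset.range n, g k := by
  obtain ⟨m, rfl⟩ := Nat.exists_eq_succ_of_ne_zero (NeZero.ne n)
  exact (Finset.sum_range g).symm

theorem sum_pow_eq_nsmul_sum_zmod [Group G] {A : Type*} [AddCommMonoid A] {n N : ℕ} [NeZero n]
    (hnN : n * N = Fintype.card G) {η : G} (hη : ∀ x, x ∈ Subgroup.zpowers η) (f : G → A) :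
    ∑ x, f (x ^ N) = N • ∑ j : ZMod n, f (η ^ (N * j.val)) := by
  have periodic : Function.Periodic (fun k => f (η ^ (N * k))) n := fun k => by
    simp only [mul_add, mul_comm N n, hnN, pow_add, pow_card_eq_one, mul_one]
  rw [sum_eq_sum_range_pow hη, ← hnN, mul_comm n, sum_zmod_val fun k => f (η ^ (N * k)),
    ← sum_range_mul_of_periodic periodic]
  simp only [← pow_mul, mul_comm N]

end GroupSums

theorem sum_units_eq_sum {F A : Type*} [Field F] [Fintype F] [Fintype Fˣ] [AddCommMonoid A]
    {f : F → A} (h0 : f 0 = 0) : ∑ u : Fˣ, f u = ∑ x, f x := by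
  classical
  rw [Fintype.sum_eq_add_sum_subtype_ne f 0, h0, zero_add]
  exact Fintype.sum_equiv unitsEquivNeZero _ _ fun _ => rfl

section QuadraticChar

variable {F : Type*} [Field F] [Fintype F] [DecidableEq F]

theorem sum_sq_eq_sum_quadraticChar (h2 : ringChar F ≠ 2) {A : Type*} [AddCommGroup A]
    (f : F → A) : ∑ v, f (v ^ 2) = ∑ x, (quadraticChar F x + 1) • f x := by
  rw [← Finset.sum_fiberwise_of_maps_to' (t := .univ) (g := (· ^ 2)) (by simp)]
  refine Finset.sum_congr rfl fun x _ => ?_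
  rw [← quadraticChar_card_sqrts h2, Finset.sum_const, natCast_zsmul]
  congr 2
  ext
  simp

theorem sum_quadraticChar_mul_comp_mul {R : Type*} [CommRing R] {a : F} (ha : a ≠ 0) (f : F → R) :
    ∑ x, (quadraticChar F x : R) * f (a * x) =
      quadraticChar F a * ∑ x, (quadraticChar F x : R) * f x := by
  have sq_eq_one : (quadraticChar F a : R) * quadraticChar F a = 1 := by
    exact_mod_cast congrArg (Int.cast : ℤ → R) (sq (quadraticChar F a) ▸ quadraticChar_sq_one ha)
  rw [Finset.mul_sum,
    ← Equiv.sum_comp (Equiv.mulLeft₀ a ha) fun x => (quadraticChar F a : R) * (_ * f x)]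
  refine Finset.sum_congr rfl fun x _ => ?_
  rw [Equiv.mulLeft₀_apply, map_mul, Int.cast_mul]
  linear_combination (-((quadraticChar F x : R) * f (a * x))) * sq_eq_one

theorem sum_mul_sq_eq_add_quadraticChar_mul (h2 : ringChar F ≠ 2) {a : F} (ha : a ≠ 0)
    (f : F → ℤ) :
    ∑ v, f (a * v ^ 2) = ∑ x, f x + quadraticChar F a * ∑ x, quadraticChar F x * f x := by
  have shift := sum_quadraticChar_mul_comp_mul ha f
  simp only [Int.cast_id] at shift
  rw [sum_sq_eq_sum_quadraticChar h2 fun x => f (a * x), ← shift,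
    ← Equiv.sum_comp (Equiv.mulLeft₀ a ha) f, ← Finset.sum_add_distrib]
  refine Finset.sum_congr rfl fun x _ => ?_
  rw [Equiv.mulLeft₀_apply, smul_eq_mul]
  ring

end QuadraticChar

open Classical in
/-- The indicator of the elements of `F` whose trace to `K` is nonzero, with values in `ℤ`. -/
noncomputable def traceIndicator (K F : Type*) [Field K] [Field F] [Algebra K F] (x : F) : ℤ :=
  if Algebra.trace K F x = 0 then 0 else 1

section TraceIndicator

variable {K F : Type*} [Field K] [Field F] [Algebra K F]

@[simp]
theorem traceIndicator_zero : traceIndicator K F 0 = 0 := by simp [traceIndicator]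

theorem traceIndicator_congr {K' F' : Type*} [Field K'] [Field F'] [Algebra K' F'] {x : F} {y : F'}
    (h : Algebra.trace K F x = 0 ↔ Algebra.trace K' F' y = 0) :
    traceIndicator K F x = traceIndicator K' F' y := by
  classical exact if_congr h rfl rfl

theorem traceIndicator_algebraMap_mul {c : K} (hc : c ≠ 0) (x : F) :
    traceIndicator K F (algebraMap K F c * x) = traceIndicator K F x :=
  traceIndicator_congr (by simp [← Algebra.smul_def, hc])

theorem hammingNorm_trace_eq_sum {ι : Type*} [Fintype ι] [DecidableEq K] (x : ι → F) :
    (hammingNorm fun i => Algebra.trace K F (x i) : ℤ) = ∑ i, traceIndicator K F (x i) := by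
  rw [hammingNorm, Finset.card_filter, Nat.cast_sum]
  refine Finset.sum_congr rfl fun i _ => ?_
  unfold traceIndicator
  split_ifs <;> simp_all

theorem traceIndicator_pow_mul [Finite F] (v : Fˣ) (x : F) :
    traceIndicator K F (v ^ ((Nat.card F - 1) / (Nat.card K - 1)) * x) = traceIndicator K F x := by
  have : Finite K := .of_injective _ (algebraMap K F).injective
  rw [← FiniteField.algebraMap_norm_eq_pow,
    traceIndicator_algebraMap_mul (Algebra.norm_ne_zero_iff.2 v.ne_zero)]

theorem sum_traceIndicator_mul_pow [Finite F] [Fintype Fˣ] (a : F) (N : ℕ) :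
    ∑ u : Fˣ, traceIndicator K F (a * u ^ N) =
      ∑ u : Fˣ, traceIndicator K F
        (a * u ^ ((Nat.card F - 1) / (Nat.card K - 1)).gcd N) := by
  have invariant (v u : Fˣ) :
      traceIndicator K F (a * ↑(v ^ ((Nat.card F - 1) / (Nat.card K - 1)) * u)) =
        traceIndicator K F (a * u) := by
    rw [Units.val_mul, Units.val_pow_eq_pow_val, mul_left_comm, traceIndicator_pow_mul]
  simpa using sum_pow_eq_sum_pow_gcd (f := fun u : Fˣ => traceIndicator K F (a * u)) invariant N

theorem mul_hammingNorm_trace_eq_sum_units [Fintype Fˣ] [DecidableEq K] {n N : ℕ} [NeZero n]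
    (hnN : n * N = Nat.card F - 1) {η : Fˣ} (hη : ∀ x, x ∈ Subgroup.zpowers η) (a : F) :
    (N : ℤ) * hammingNorm (fun j : ZMod n => Algebra.trace K F (a * (η : F) ^ (N * j.val))) =
      ∑ u : Fˣ, traceIndicator K F (a * u ^ N) := by
  have card_units : n * N = Fintype.card Fˣ := by
    rw [hnN, ← Nat.card_units, Nat.card_eq_fintype_card]
  rw [hammingNorm_trace_eq_sum, ← nsmul_eq_mul]
  simpa using
    (sum_pow_eq_nsmul_sum_zmod card_units hη fun u : Fˣ => traceIndicator K F (a * u)).symm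

theorem card_mul_card_ker_trace [Finite F] :
    Nat.card K * Nat.card (Algebra.trace K F).ker = Nat.card F := by
  have surjective : (Algebra.trace K F).toAddMonoidHom.range = ⊤ :=
    AddMonoidHom.range_eq_top.2 (Algebra.trace_surjective K F)
  rw [mul_comm, ← (Algebra.trace K F).toAddMonoidHom.ker.card_mul_index, AddSubgroup.index_ker,
    surjective, AddSubgroup.card_top]
  rfl

theorem sum_traceIndicator_add_card_ker [Fintype F] :
    ∑ x : F, traceIndicator K F x + Nat.card (Algebra.trace K F).ker = Nat.card F := by
  classical
  have card_ker : (Nat.card (Algebra.trace K F).ker : ℤ) =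
      ∑ x : F, if Algebra.trace K F x = 0 then 1 else 0 := by
    rw [Finset.sum_boole, ← Fintype.card_subtype, ← Nat.card_eq_fintype_card]
    rfl
  rw [card_ker, ← Finset.sum_add_distrib, Nat.card_eq_fintype_card, ← Finset.card_univ,
    Finset.cast_card]
  refine Finset.sum_congr rfl fun x _ => ?_
  unfold traceIndicator
  split_ifs <;> rfl

theorem card_mul_sum_traceIndicator [Fintype F] :
    (Nat.card K : ℤ) * ∑ x : F, traceIndicator K F x = Nat.card F * (Nat.card K - 1) := by
  have card_eq : (Nat.card K : ℤ) * Nat.card (Algebra.trace K F).ker = Nat.card F :=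
    mod_cast card_mul_card_ker_trace
  linear_combination
    (Nat.card K : ℤ) * sum_traceIndicator_add_card_ker (K := K) (F := F) - card_eq

end TraceIndicator

section QuadraticExtension

variable {L F : Type*} [Field L] [Field F] [Algebra L F]

theorem natCard_eq_sq_of_finrank_eq_two (hL : Module.finrank L F = 2) :
    Nat.card F = Nat.card L ^ 2 := by
  have : Module.Finite L F := Module.finite_of_finrank_eq_succ hL
  rw [Module.natCard_eq_pow_finrank (K := L) (V := F), hL]

theorem sum_units_traceIndicator_algebraMap_mul {K : Type*} [Field K] [Algebra K L]
    [Algebra K F] [IsScalarTower K L F] [Finite F] [Fintype L] [Fintype Lˣ] (x : F) :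
    ∑ c : Lˣ, traceIndicator K F (algebraMap L F c * x) =
      traceIndicator L F x * ∑ c : L, traceIndicator K L c := by
  have tower (c : L) : traceIndicator K F (algebraMap L F c * x) =
      traceIndicator K L (c * Algebra.trace L F x) := by
    refine traceIndicator_congr ?_
    rw [← Algebra.trace_trace (S := L), ← Algebra.smul_def, map_smul, smul_eq_mul]
  simp only [tower]
  rw [sum_units_eq_sum (f := fun c => traceIndicator K L (c * Algebra.trace L F x)) (by simp)]
  by_cases ht : Algebra.trace L F x = 0
  · simp [traceIndicator, ht]
  · rw [traceIndicator, if_neg ht, one_mul]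
    exact Equiv.sum_comp (Equiv.mulRight₀ _ ht) (traceIndicator K L)

theorem natCard_mod_two_eq_one [Finite F] (h2 : ringChar F ≠ 2) (hL : Module.finrank L F = 2) :
    Nat.card L % 2 = 1 := by
  have := Fintype.ofFinite F
  have card_odd := FiniteField.odd_card_of_char_ne_two h2
  rw [← Nat.card_eq_fintype_card, natCard_eq_sq_of_finrank_eq_two hL] at card_odd
  exact Nat.odd_iff.1 (Nat.odd_pow_iff two_ne_zero |>.1 (Nat.odd_iff.2 card_odd))

theorem pow_card_sub_one_eq_neg_one_of_trace_eq_zero [Finite F]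
    (hL : Module.finrank L F = 2) {x : F} (hx : x ≠ 0) (ht : Algebra.trace L F x = 0) :
    x ^ (Nat.card L - 1) = -1 := by
  have : Finite L := .of_injective _ (algebraMap L F).injective
  have := Fintype.ofFinite F
  have trace_eq : x + x ^ Nat.card L = 0 := by
    simpa [ht, hL, Finset.sum_range_succ, eq_comm] using
      FiniteField.algebraMap_trace_eq_sum_pow L F x
  refine mul_left_cancel₀ hx ?_
  rw [mul_pow_sub_one Nat.card_pos.ne']
  linear_combination trace_eq

variable [Fintype F] [DecidableEq F]

theorem quadraticChar_eq_pow_of_finrank_eq_two (h2 : ringChar F ≠ 2)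
    (hL : Module.finrank L F = 2) (x : F) :
    (quadraticChar F x : F) = (x ^ (Nat.card L - 1)) ^ (Nat.card L / 2 + 1) := by
  have exponent : Nat.card L ^ 2 / 2 = (Nat.card L - 1) * (Nat.card L / 2 + 1) := by
    obtain ⟨k, hk⟩ : ∃ k, Nat.card L = 2 * k + 1 :=
      ⟨Nat.card L / 2, by have := natCard_mod_two_eq_one h2 hL; omega⟩
    have half : (2 * k + 1) / 2 = k := by omega
    have sq_eq : (2 * k + 1) ^ 2 = 2 * (2 * k * (k + 1)) + 1 := by ring
    rw [hk, half, Nat.add_sub_cancel]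
    omega
  rw [quadraticChar_eq_pow_of_char_ne_two' h2, ← Nat.card_eq_fintype_card,
    natCard_eq_sq_of_finrank_eq_two hL, exponent, pow_mul]

theorem quadraticChar_algebraMap_eq_one (h2 : ringChar F ≠ 2) (hL : Module.finrank L F = 2)
    {c : L} (hc : c ≠ 0) : quadraticChar F (algebraMap L F c) = 1 := by
  have : Finite L := .of_injective _ (algebraMap L F).injective
  have := Fintype.ofFinite L
  have hc' : algebraMap L F c ≠ 0 := by simpa using hc
  refine Int.cast_injOn_of_ringChar_ne_two h2
    (by rcases quadraticChar_dichotomy hc' with h | h <;> simp [h]) (by simp) ?_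
  rw [quadraticChar_eq_pow_of_finrank_eq_two h2 hL, ← map_pow, Nat.card_eq_fintype_card,
    FiniteField.pow_card_sub_one_eq_one c hc, map_one, one_pow, Int.cast_one]

theorem quadraticChar_eq_neg_χ₄_of_trace_eq_zero (h2 : ringChar F ≠ 2)
    (hL : Module.finrank L F = 2) {x : F} (hx : x ≠ 0) (ht : Algebra.trace L F x = 0) :
    quadraticChar F x = -ZMod.χ₄ (Nat.card L) := by
  rw [ZMod.χ₄_eq_neg_one_pow (natCard_mod_two_eq_one h2 hL), ← mul_neg_one, ← pow_succ]
  refine Int.cast_injOn_of_ringChar_ne_two h2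
    (by rcases quadraticChar_dichotomy hx with h | h <;> simp [h])
    (by rcases neg_one_pow_eq_or ℤ (Nat.card L / 2 + 1) with h | h <;> simp [h]) ?_
  rw [quadraticChar_eq_pow_of_finrank_eq_two h2 hL,
    pow_card_sub_one_eq_neg_one_of_trace_eq_zero hL hx ht]
  push_cast
  rfl

theorem sum_quadraticChar_mul_traceIndicator_of_finrank_eq_two (h2 : ringChar F ≠ 2)
    (hL : Module.finrank L F = 2) :
    ∑ x : F, quadraticChar F x * traceIndicator L F x =
      ZMod.χ₄ (Nat.card L) * (Nat.card L - 1) := by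
  have : Finite L := .of_injective _ (algebraMap L F).injective
  have pointwise (x : F) : quadraticChar F x * traceIndicator L F x = quadraticChar F x +
      ZMod.χ₄ (Nat.card L) * (1 - traceIndicator L F x - if x = 0 then 1 else 0) := by
    by_cases hx : x = 0
    · simp [hx]
    by_cases ht : Algebra.trace L F x = 0
    · simp [traceIndicator, hx, ht, quadraticChar_eq_neg_χ₄_of_trace_eq_zero h2 hL hx ht]
    · simp [traceIndicator, hx, ht]
  have sum_indicator : ∑ x : F, traceIndicator L F x = Nat.card L * (Nat.card L - 1) := by
    have card_mul := card_mul_sum_traceIndicator (K := L) (F := F)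
    rw [natCard_eq_sq_of_finrank_eq_two hL] at card_mul
    refine mul_left_cancel₀ (Nat.cast_ne_zero.2 (Nat.card_pos (α := L)).ne') ?_
    rw [card_mul]
    push_cast
    ring
  have card_sq : (Fintype.card F : ℤ) = (Nat.card L : ℤ) ^ 2 := by
    rw [← Nat.card_eq_fintype_card, natCard_eq_sq_of_finrank_eq_two hL, Nat.cast_pow]
  simp only [pointwise, Finset.sum_add_distrib, ← Finset.mul_sum, Finset.sum_sub_distrib,
    quadraticChar_sum_zero h2, sum_indicator, Finset.sum_const, Finset.card_univ, nsmul_eq_mul,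
    card_sq, Finset.sum_ite_eq', Finset.mem_univ, if_true]
  ring

theorem sum_quadraticChar_mul_traceIndicator {K : Type*} [Field K] [Algebra K L] [Algebra K F]
    [IsScalarTower K L F] [Fintype L] (h2 : ringChar F ≠ 2) (hL : Module.finrank L F = 2) :
    ∑ x : F, quadraticChar F x * traceIndicator K F x =
      ZMod.χ₄ (Nat.card L) * ∑ c : L, traceIndicator K L c := by
  classical
  have translate (c : Lˣ) :
      ∑ x : F, quadraticChar F x * traceIndicator K F (algebraMap L F c * x) =
        ∑ x : F, quadraticChar F x * traceIndicator K F x := by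
    simpa [quadraticChar_algebraMap_eq_one h2 hL c.ne_zero] using
      sum_quadraticChar_mul_comp_mul (a := algebraMap L F c) (by simp) (traceIndicator K F)
  have card_units : (Fintype.card Lˣ : ℤ) = Nat.card L - 1 := by
    rw [Fintype.card_units, Nat.card_eq_fintype_card, Nat.cast_pred Fintype.card_pos]
  refine mul_left_cancel₀ (Nat.cast_ne_zero.2 (Fintype.card_ne_zero (α := Lˣ))) ?_
  calc (Fintype.card Lˣ : ℤ) * ∑ x : F, quadraticChar F x * traceIndicator K F x
      = ∑ c : Lˣ, ∑ x : F, quadraticChar F x * traceIndicator K F (algebraMap L F c * x) := by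
        simp only [translate, Finset.sum_const, Finset.card_univ, nsmul_eq_mul]
    _ = (∑ x : F, quadraticChar F x * traceIndicator L F x) * ∑ c : L, traceIndicator K L c := by
        rw [Finset.sum_comm, Finset.sum_mul]
        simp only [← Finset.mul_sum, sum_units_traceIndicator_algebraMap_mul, mul_assoc]
    _ = _ := by
        rw [sum_quadraticChar_mul_traceIndicator_of_finrank_eq_two h2 hL, card_units]
        ring

end QuadraticExtension

theorem exists_intermediateField_finrank_eq_two {K F : Type*} [Field K] [Field F] [Algebra K F]
    [FiniteDimensional K F] [IsGalois K F] (h : Even (Module.finrank K F)) :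
    ∃ L : IntermediateField K F, Module.finrank L F = 2 := by
  obtain ⟨σ, hσ⟩ := exists_prime_orderOf_dvd_card' (G := Gal(F/K)) 2
    (by rw [IsGalois.card_aut_eq_finrank]; exact h.two_dvd)
  refine ⟨IntermediateField.fixedField (Subgroup.zpowers σ), ?_⟩
  rw [IntermediateField.finrank_fixedField_eq_card, Nat.card_zpowers, hσ]

section EvenDegree

variable {K F : Type*} [Field K] [Field F] [Algebra K F] [Fintype F] [DecidableEq F] {q s : ℕ}

theorem card_mul_sum_quadraticChar_mul_traceIndicator (hK : Nat.card K = q)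
    (hF : Nat.card F = (q ^ s) ^ 2) (h2 : ringChar F ≠ 2) :
    (q : ℤ) * ∑ x : F, quadraticChar F x * traceIndicator K F x =
      ZMod.χ₄ q ^ s * q ^ s * (q - 1) := by
  have : Finite K := .of_injective _ (algebraMap K F).injective
  have finrank_eq : Module.finrank K F = s * 2 := by
    have card_eq := Module.natCard_eq_pow_finrank (K := K) (V := F)
    rw [hF, hK, ← pow_mul] at card_eq
    exact (Nat.pow_right_injective (hK ▸ Finite.one_lt_card (α := K)) card_eq).symm
  obtain ⟨L, hL⟩ := exists_intermediateField_finrank_eq_two (K := K) (F := F)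
    (finrank_eq ▸ even_two.mul_left s)
  have := Fintype.ofFinite L
  have card_L : Nat.card L = q ^ s :=
    Nat.pow_left_injective two_ne_zero (by simp only [← natCard_eq_sq_of_finrank_eq_two hL, hF])
  have sum_L := card_mul_sum_traceIndicator (K := K) (F := L)
  rw [hK, card_L] at sum_L
  rw [sum_quadraticChar_mul_traceIndicator h2 hL, card_L, mul_left_comm, sum_L]
  push_cast
  rw [map_pow]
  ring

theorem card_mul_sum_traceIndicator_mul_sq (hK : Nat.card K = q)
    (hF : Nat.card F = (q ^ s) ^ 2) (h2 : ringChar F ≠ 2) {a : F} (ha : a ≠ 0) :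
    (q : ℤ) * ∑ v : F, traceIndicator K F (a * v ^ 2) =
      ((q ^ s) ^ 2 + ZMod.χ₄ q ^ s * quadraticChar F a * q ^ s) * (q - 1) := by
  have sum_all := card_mul_sum_traceIndicator (K := K) (F := F)
  have sum_char := card_mul_sum_quadraticChar_mul_traceIndicator hK hF h2
  rw [hK, hF] at sum_all
  push_cast at sum_all
  rw [sum_mul_sq_eq_add_quadraticChar_mul h2 ha]
  linear_combination sum_all + quadraticChar F a * sum_char

theorem hamming_weight_c_p1mod4_general [DecidableEq K] {r N n : ℕ} [NeZero n]
    (hK : Nat.card K = q) (hF : Nat.card F = q ^ r) (hr : Even r) (hnN : n * N = q ^ r - 1)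
    (hgcd : Nat.gcd ((q ^ r - 1) / (q - 1)) N = 2)
    {η : Fˣ} (hη : ∀ x : Fˣ, x ∈ Subgroup.zpowers η) {a : F} (ha : a ≠ 0) :
    (hammingNorm (fun j : ZMod n => Algebra.trace K F (a * (η : F) ^ (N * j.val))) : ℚ) =
      1 / N * (q ^ r -
        (q ^ r - ZMod.χ₄ q ^ (r / 2) * quadraticChar F a * (q - 1) * q ^ (r / 2)) / q) := by
  obtain ⟨s, rfl⟩ := hr.two_dvd
  have : Finite K := .of_injective _ (algebraMap K F).injective
  have card_gt_one : 1 < q ^ (2 * s) := hF ▸ Finite.one_lt_card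
  have hN : (N : ℚ) ≠ 0 := by
    intro h
    simp only [Nat.cast_eq_zero.1 h, mul_zero] at hnN
    omega
  have hq : (q : ℚ) ≠ 0 := Nat.cast_ne_zero.2 (hK ▸ Nat.card_pos.ne')
  have h2 : ringChar F ≠ 2 := by
    have two_dvd : 2 ∣ q ^ (2 * s) - 1 := hnN ▸ (hgcd ▸ Nat.gcd_dvd_right _ N).mul_left n
    rw [Ne, FiniteField.even_card_iff_char_two, ← Nat.card_eq_fintype_card, hF]
    omega
  have weight := mul_hammingNorm_trace_eq_sum_units (K := K) (hF ▸ hnN) hη a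
  classical
  rw [sum_traceIndicator_mul_pow, hF, hK, hgcd,
    sum_units_eq_sum (f := fun v => traceIndicator K F (a * v ^ 2)) (by simp)] at weight
  have count := card_mul_sum_traceIndicator_mul_sq hK (by rw [hF, ← pow_mul, mul_comm]) h2 ha
  rw [← weight, ← @Int.cast_inj ℚ] at count
  push_cast at count
  rw [Nat.mul_div_cancel_left s two_pos, mul_comm 2 s, pow_mul]
  field_simp
  linear_combination count

end EvenDegree

open Classical in
/-- The Hamming weight of `c(a) = (Tr(a η^{jN}))_{j=0}^{n-1}` for `p ≡ 1 (mod 4)`: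
it equals `(1/N)(q^r - (q^r - (q-1)q^{r/2})/q)` when `a` is a nonzero square, and
`(1/N)(q^r - (q^r + (q-1)q^{r/2})/q)` when `a` is a non-square. -/
theorem hamming_weight_c_p1mod4 (p e q r N n : ℕ) (hp : p.Prime) (hpodd : Odd p)
    (hp4 : p % 4 = 1) (he : 0 < e) (hqe : q = p ^ e)
    (hr : 2 ≤ r) (hre : Even r) (hN : 0 < N) [NeZero n]
    (hnN : n * N = q ^ r - 1)
    (hgcd : Nat.gcd ((q ^ r - 1) / (q - 1)) N = 2)
    (F : Type*) [Field F] [Fintype F] (hF : Fintype.card F = q ^ r)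
    (K : Subfield F) (hK : Nat.card K = q)
    (η : Fˣ) (hη : ∀ x : Fˣ, x ∈ Subgroup.zpowers η)
    (a : F) (ha : a ≠ 0) :
    (IsSquare a →
      ((hammingNorm (fun j : ZMod n =>
          Algebra.trace ↥K F (a * (η : F) ^ (N * j.val)))) : ℚ) =
        (1 / (N : ℚ)) *
          ((q : ℚ) ^ r - ((q : ℚ) ^ r - ((q : ℚ) - 1) * (q : ℚ) ^ (r / 2)) / q)) ∧
    (¬ IsSquare a →
      ((hammingNorm (fun j : ZMod n =>
          Algebra.trace ↥K F (a * (η : F) ^ (N * j.val)))) : ℚ) =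
        (1 / (N : ℚ)) *
          ((q : ℚ) ^ r - ((q : ℚ) ^ r + ((q : ℚ) - 1) * (q : ℚ) ^ (r / 2)) / q)) := by
  have hχ : ZMod.χ₄ q = 1 := ZMod.χ₄_nat_one_mod_four (by simp [hqe, Nat.pow_mod, hp4])
  have weight := hamming_weight_c_p1mod4_general hK (Nat.card_eq_fintype_card.trans hF) hre hnN
    hgcd hη ha
  rw [hχ, Int.cast_one, one_pow, one_mul] at weight
  exact ⟨fun h => weight.trans (by rw [(quadraticChar_one_iff_isSquare ha).2 h]; push_cast; ring),
    fun h => weight.trans (by rw [quadraticChar_neg_one_iff_not_isSquare.2 h]; push_cast; ring)⟩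
end
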